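/- arXiv:2511.06207 — 2 statements merged into one kernel-verified Lean document; each statement's English description precedes it below -/
import Mathlib

section
/- Let (T_i)_{i=1}^∞ be a sequence of bounded linear operators from a normed linear space X over 𝕂 (𝕂 = ℝ or ℂ) to a normed linear space Y. The following are equivalent: (1) (T_i) is mean Li-Yorke chaotic; (2) there exists a mean Li-Yorke pair; (3) there exists an absolutely mean semi-irregular vector. -/
open Filter Topology

variable {𝕜 X Y : Type*} [RCLike 𝕜] [NormedAddCommGroup X] [NormedSpace 𝕜 X]
  [NormedAddCommGroup Y] [NormedSpace 𝕜 Y]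

/-- The Cesàro average `(1/n) ∑_{i=1}^{n} ‖T i x - T i y‖`. -/
noncomputable def mavg (T : ℕ → X →L[𝕜] Y) (x y : X) (n : ℕ) : ℝ :=
  (∑ i ∈ Finset.Icc 1 n, ‖T i x - T i y‖) / n

/-- The Cesàro average `(1/n) ∑_{i=1}^{n} ‖T i x‖`. -/
noncomputable def avg (T : ℕ → X →L[𝕜] Y) (x : X) (n : ℕ) : ℝ :=
  (∑ i ∈ Finset.Icc 1 n, ‖T i x‖) / n

/-- `limsup_n (1/n) ∑_{i=1}^{n} ‖T i x - T i y‖`, computed in `EReal`. -/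
noncomputable def msup (T : ℕ → X →L[𝕜] Y) (x y : X) : EReal :=
  Filter.limsup (fun n => (mavg T x y n : EReal)) Filter.atTop

/-- `liminf_n (1/n) ∑_{i=1}^{n} ‖T i x - T i y‖`, computed in `EReal`. -/
noncomputable def minf (T : ℕ → X →L[𝕜] Y) (x y : X) : EReal :=
  Filter.liminf (fun n => (mavg T x y n : EReal)) Filter.atTop

/-- `limsup_n (1/n) ∑_{i=1}^{n} ‖T i x‖`, computed in `EReal`. -/
noncomputable def asup (T : ℕ → X →L[𝕜] Y) (x : X) : EReal :=
  Filter.limsup (fun n => (avg T x n : EReal)) Filter.atTop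

/-- `liminf_n (1/n) ∑_{i=1}^{n} ‖T i x‖`, computed in `EReal`. -/
noncomputable def ainf (T : ℕ → X →L[𝕜] Y) (x : X) : EReal :=
  Filter.liminf (fun n => (avg T x n : EReal)) Filter.atTop

/-- `(x, y)` is a mean Li-Yorke pair for `(T i)`. -/
def MeanLiYorkePair (T : ℕ → X →L[𝕜] Y) (x y : X) : Prop :=
  minf T x y = 0 ∧ 0 < msup T x y

/-- `x` is an absolutely mean semi-irregular vector for `(T i)`. -/
def AbsolutelyMeanSemiIrregular (T : ℕ → X →L[𝕜] Y) (x : X) : Prop :=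
  ainf T x = 0 ∧ 0 < asup T x

/-- `(T i)` is mean Li-Yorke chaotic: there is an uncountable set all of whose pairs of
distinct points are mean Li-Yorke pairs. -/
def MeanLiYorkeChaotic (T : ℕ → X →L[𝕜] Y) : Prop :=
  ∃ K : Set X, ¬ K.Countable ∧ ∀ x ∈ K, ∀ y ∈ K, x ≠ y → MeanLiYorkePair T x y

/-!
The averages `x ↦ (1/n) ∑_{i=1}^{n} ‖T i x‖` are seminorms, and the average attached to a pair
`(x, y)` is the value of this seminorm at `x - y`. Scaling a vector by `c` multiplies the lower and
upper limits of any sequence of seminorms by `‖c‖`. So if `x` is semi-irregular, then so is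
`c • x - d • x = (c - d) • x` for all scalars `c ≠ d`, and the scalar multiples of `x` form an
uncountable set of the required kind.
-/

section Seminorms

variable {R E ι : Type*} [AddCommGroup E]

/-- A vector is semi-irregular for a family of seminorms along a filter if its seminorms have lower
limit zero and positive upper limit. Absolute mean semi-irregularity is the case of the seminorms
`avgSeminorm T n`. The limits are taken in `EReal`, so that the upper limit may be infinite. -/
def IsSemiIrregular [SeminormedRing R] [Module R E] (p : ι → Seminorm R E) (l : Filter ι) (x : E) :
    Prop :=
  liminf (fun i => (p i x : EReal)) l = 0 ∧ 0 < limsup (fun i => (p i x : EReal)) l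

namespace IsSemiIrregular

section SeminormedRing

variable [SeminormedRing R] [Module R E] {p : ι → Seminorm R E} {l : Filter ι} [NeBot l] {x : E}

theorem ne_zero (hx : IsSemiIrregular p l x) : x ≠ 0 := by
  rintro rfl
  simpa only [map_zero, EReal.coe_zero, limsup_const, lt_self_iff_false] using hx.2

theorem smul {c : R} (hc : ‖c‖ ≠ 0) (hx : IsSemiIrregular p l x) :
    IsSemiIrregular p l (c • x) := by
  have hc_pos : (0 : EReal) < ‖c‖ := mod_cast (norm_nonneg c).lt_of_ne' hc
  simp only [IsSemiIrregular, map_smul_eq_mul, EReal.coe_mul]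
  rw [EReal.liminf_const_mul_of_nonneg_of_ne_top hc_pos.le (EReal.coe_ne_top _),
    EReal.limsup_const_mul_of_nonneg_of_ne_top hc_pos.le (EReal.coe_ne_top _), hx.1, mul_zero]
  exact ⟨rfl, EReal.mul_pos hc_pos hx.2⟩

end SeminormedRing

variable [NormedRing R] [Module R E] {p : ι → Seminorm R E} {l : Filter ι} [NeBot l] {x : E}

theorem smul_sub_smul (hx : IsSemiIrregular p l x) {c d : R} (hcd : c ≠ d) :
    IsSemiIrregular p l (c • x - d • x) := by
  rw [← sub_smul]
  exact hx.smul (norm_ne_zero_iff.2 (sub_ne_zero.2 hcd))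

theorem smul_left_injective (hx : IsSemiIrregular p l x) :
    Function.Injective fun c : R => c • x := fun _ _ hcd =>
  by_contra fun hne => (hx.smul_sub_smul hne).ne_zero (sub_eq_zero.2 hcd)

theorem not_countable_range_smul [Uncountable R] (hx : IsSemiIrregular p l x) :
    ¬ (Set.range fun c : R => c • x).Countable := fun h =>
  not_countable ((Equiv.ofInjective _ hx.smul_left_injective).countable_iff.2 h)

theorem pairwise_range_smul (hx : IsSemiIrregular p l x) :
    (Set.range fun c : R => c • x).Pairwise fun y z => IsSemiIrregular p l (y - z) := by
  rintro _ ⟨c, rfl⟩ _ ⟨d, rfl⟩ hne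
  exact hx.smul_sub_smul (ne_of_apply_ne (· • x) hne)

end IsSemiIrregular

theorem meanLiYorkeChaotic_tfae_general [NormedRing R] [Uncountable R] [Module R E]
    (p : ι → Seminorm R E) (l : Filter ι) [NeBot l] :
    List.TFAE [
      ∃ K : Set E, ¬ K.Countable ∧ K.Pairwise fun x y => IsSemiIrregular p l (x - y),
      ∃ x y : E, IsSemiIrregular p l (x - y),
      ∃ x : E, IsSemiIrregular p l x] := by
  tfae_have 1 → 2 := by
    rintro ⟨K, hK, hpair⟩
    obtain ⟨x, hx, y, hy, hxy⟩ : K.Nontrivial :=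
      Set.not_subsingleton_iff.1 fun hsub => hK hsub.countable
    exact ⟨x, y, hpair hx hy hxy⟩
  tfae_have 2 → 3 := fun ⟨x, y, hxy⟩ => ⟨x - y, hxy⟩
  tfae_have 3 → 1 := fun ⟨_, hx⟩ => ⟨_, hx.not_countable_range_smul, hx.pairwise_range_smul⟩
  tfae_finish

end Seminorms

/-- The Cesàro average `x ↦ (1/n) ∑_{i=1}^{n} ‖T i x‖` as a seminorm, which brings mean Li-Yorke
chaos under `IsSemiIrregular`. At `n = 0` it is zero, in agreement with `avg`. -/
noncomputable def avgSeminorm (T : ℕ → X →L[𝕜] Y) (n : ℕ) : Seminorm 𝕜 X :=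
  (n : NNReal)⁻¹ • ∑ i ∈ Finset.Icc 1 n, (normSeminorm 𝕜 Y).comp (T i : X →ₗ[𝕜] Y)

theorem avgSeminorm_apply (T : ℕ → X →L[𝕜] Y) (n : ℕ) (x : X) :
    avgSeminorm T n x = avg T x n := by
  simp [avgSeminorm, avg, NNReal.smul_def, div_eq_inv_mul]

theorem absolutelyMeanSemiIrregular_iff_isSemiIrregular (T : ℕ → X →L[𝕜] Y) (x : X) :
    AbsolutelyMeanSemiIrregular T x ↔ IsSemiIrregular (avgSeminorm T) atTop x := by
  simp only [AbsolutelyMeanSemiIrregular, ainf, asup, IsSemiIrregular, avgSeminorm_apply]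

theorem mavg_eq_avg_sub (T : ℕ → X →L[𝕜] Y) (x y : X) : mavg T x y = avg T (x - y) := by
  funext n
  simp only [mavg, avg, map_sub]

theorem meanLiYorkePair_iff_isSemiIrregular_sub (T : ℕ → X →L[𝕜] Y) (x y : X) :
    MeanLiYorkePair T x y ↔ IsSemiIrregular (avgSeminorm T) atTop (x - y) := by
  rw [← absolutelyMeanSemiIrregular_iff_isSemiIrregular]
  simp only [MeanLiYorkePair, minf, msup, mavg_eq_avg_sub, AbsolutelyMeanSemiIrregular, ainf, asup]

/-- Mean Li-Yorke chaos is equivalent to the existence of a mean Li-Yorke pair,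
and to the existence of an absolutely mean semi-irregular vector. -/
theorem meanLiYorkeChaotic_tfae (T : ℕ → X →L[𝕜] Y) :
    List.TFAE [
      MeanLiYorkeChaotic T,
      ∃ x y : X, MeanLiYorkePair T x y,
      ∃ x : X, AbsolutelyMeanSemiIrregular T x] := by
  have : Uncountable 𝕜 := RCLike.ofReal_injective.uncountable
  simpa only [MeanLiYorkeChaotic, Set.Pairwise, ne_eq, meanLiYorkePair_iff_isSemiIrregular_sub,
    absolutelyMeanSemiIrregular_iff_isSemiIrregular]
    using meanLiYorkeChaotic_tfae_general (avgSeminorm T) atTop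
end

section
/- Let (T_i)_{i=1}^∞ be a sequence of bounded linear operators from a normed linear space X over 𝕂 (𝕂 = ℝ or ℂ) to a normed linear space Y. The following are equivalent: (1) (T_i) is mean Li-Yorke extremely chaotic; (2) there exists a mean Li-Yorke extreme pair; (3) there exists an absolutely mean irregular vector. -/
open Filter Topology

variable {𝕜 X Y : Type*} [RCLike 𝕜] [NormedAddCommGroup X] [NormedSpace 𝕜 X]
  [NormedAddCommGroup Y] [NormedSpace 𝕜 Y]

/-- `(x, y)` is a mean Li-Yorke extreme pair for `(T i)`. -/
def MeanLiYorkeExtremePair (T : ℕ → X →L[𝕜] Y) (x y : X) : Prop :=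
  minf T x y = 0 ∧ msup T x y = ⊤

/-- `x` is an absolutely mean irregular vector for `(T i)`. -/
def AbsolutelyMeanIrregular (T : ℕ → X →L[𝕜] Y) (x : X) : Prop :=
  ainf T x = 0 ∧ asup T x = ⊤

/-- `(T i)` is mean Li-Yorke extremely chaotic: there is an uncountable set all of
whose pairs of distinct points are mean Li-Yorke extreme pairs. -/
def MeanLiYorkeExtremelyChaotic (T : ℕ → X →L[𝕜] Y) : Prop :=
  ∃ K : Set X, ¬ K.Countable ∧ ∀ x ∈ K, ∀ y ∈ K, x ≠ y → MeanLiYorkeExtremePair T x y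

/-!
Each average `avg T · n` is a seminorm, so the average of `‖T i x - T i y‖` depends only on `x - y`,
and multiplying a vector by `c` multiplies the lower and upper limits of its averages by `‖c‖`.
For `c ≠ 0` this preserves the values `0` and `⊤`. Hence all nonzero multiples of an irregular
vector `x` are irregular; in particular so are the differences `(a - b) • x` of distinct points of
the line spanned by `x`, which is uncountable because the scalar field is.
-/

theorem not_countable_range_smul {R M : Type*} [Ring R] [IsCancelMulZero R] [Uncountable R]
    [AddCommGroup M] [Module R M] [Module.IsTorsionFree R M] {x : M} (hx : x ≠ 0) :
    ¬ (Set.range fun c : R => c • x).Countable := by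
  rw [← Set.image_univ]
  exact fun h => Set.not_countable_univ <|
    Set.countable_of_injective_of_countable_image (smul_left_injective R hx).injOn h

section Seminorm

variable {𝕂 E ι : Type*} [SeminormedRing 𝕂] [AddGroup E] [SMul 𝕂 E]
  {q : ι → Seminorm 𝕂 E} {l : Filter ι} {x : E}

/-- Absolute irregularity of a vector for a family of seminorms along a filter. For the Cesàro means
of `‖T i ·‖` along `atTop` this is absolute mean irregularity. The limits are taken in `EReal`, so
that an unbounded `limsup` has the value `⊤`. -/
def AbsolutelyIrregular (q : ι → Seminorm 𝕂 E) (l : Filter ι) (x : E) : Prop :=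
  liminf (fun i => (q i x : EReal)) l = 0 ∧ limsup (fun i => (q i x : EReal)) l = ⊤

theorem liminf_seminorm_smul [l.NeBot] (c : 𝕂) :
    liminf (fun i => (q i (c • x) : EReal)) l =
      (‖c‖ : EReal) * liminf (fun i => (q i x : EReal)) l := by
  simp only [map_smul_eq_mul, EReal.coe_mul]
  exact EReal.liminf_const_mul_of_nonneg_of_ne_top (by simp) (EReal.coe_ne_top _)

theorem limsup_seminorm_smul [l.NeBot] (c : 𝕂) :
    limsup (fun i => (q i (c • x) : EReal)) l =
      (‖c‖ : EReal) * limsup (fun i => (q i x : EReal)) l := by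
  simp only [map_smul_eq_mul, EReal.coe_mul]
  exact EReal.limsup_const_mul_of_nonneg_of_ne_top (by simp) (EReal.coe_ne_top _)

theorem AbsolutelyIrregular.neBot (hx : AbsolutelyIrregular q l x) : l.NeBot :=
  ⟨by rintro rfl; simpa using hx.1⟩

theorem AbsolutelyIrregular.ne_zero (hx : AbsolutelyIrregular q l x) : x ≠ 0 := by
  have := hx.neBot
  rintro rfl
  simpa using hx.2

end Seminorm

section Line

variable {𝕂 E ι : Type*} [NormedDivisionRing 𝕂] [AddCommGroup E] [Module 𝕂 E]
  {q : ι → Seminorm 𝕂 E} {l : Filter ι} {x : E}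

theorem AbsolutelyIrregular.smul (hx : AbsolutelyIrregular q l x) {c : 𝕂} (hc : c ≠ 0) :
    AbsolutelyIrregular q l (c • x) := by
  have := hx.neBot
  constructor
  · rw [liminf_seminorm_smul, hx.1, mul_zero]
  · rw [limsup_seminorm_smul, hx.2, EReal.coe_mul_top_of_pos (norm_pos_iff.2 hc)]

theorem AbsolutelyIrregular.pairwise_range_smul (hx : AbsolutelyIrregular q l x) :
    (Set.range fun c : 𝕂 => c • x).Pairwise fun y z => AbsolutelyIrregular q l (y - z) := by
  rintro _ ⟨a, rfl⟩ _ ⟨b, rfl⟩ hab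
  have hne : a - b ≠ 0 := sub_ne_zero.2 fun h => hab (congrArg (· • x) h)
  simpa only [sub_smul] using hx.smul hne

theorem meanLiYorkeExtremelyChaotic_tfae_general [Uncountable 𝕂] (q : ι → Seminorm 𝕂 E)
    (l : Filter ι) :
    List.TFAE [
      ∃ K : Set E, ¬ K.Countable ∧ K.Pairwise fun x y => AbsolutelyIrregular q l (x - y),
      ∃ x y : E, AbsolutelyIrregular q l (x - y),
      ∃ x : E, AbsolutelyIrregular q l x] := by
  tfae_have 1 → 2 := by
    rintro ⟨K, hK, hirr⟩
    have hnontrivial : K.Nontrivial :=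
      Set.not_subsingleton_iff.1 fun h => hK h.countable
    obtain ⟨x, hx, y, hy, hxy⟩ := hnontrivial
    exact ⟨x, y, hirr hx hy hxy⟩
  tfae_have 2 → 3 := fun ⟨x, y, h⟩ => ⟨x - y, h⟩
  tfae_have 3 → 1 := fun ⟨_, hx⟩ =>
    ⟨_, not_countable_range_smul hx.ne_zero, hx.pairwise_range_smul⟩
  tfae_finish

end Line

theorem absolutelyMeanIrregular_iff (T : ℕ → X →L[𝕜] Y) (x : X) :
    AbsolutelyMeanIrregular T x ↔ AbsolutelyIrregular (avgSeminorm T) atTop x := by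
  simp only [AbsolutelyMeanIrregular, AbsolutelyIrregular, ainf, asup, avgSeminorm_apply]

theorem meanLiYorkeExtremePair_iff (T : ℕ → X →L[𝕜] Y) (x y : X) :
    MeanLiYorkeExtremePair T x y ↔ AbsolutelyIrregular (avgSeminorm T) atTop (x - y) := by
  simp only [MeanLiYorkeExtremePair, AbsolutelyIrregular, minf, msup, mavg_eq_avg_sub,
    avgSeminorm_apply]

/-- Mean Li-Yorke extreme chaos is equivalent to the existence of a mean Li-Yorke
extreme pair, and to the existence of an absolutely mean irregular vector. -/
theorem meanLiYorkeExtremelyChaotic_tfae (T : ℕ → X →L[𝕜] Y) :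
    List.TFAE [
      MeanLiYorkeExtremelyChaotic T,
      ∃ x y : X, MeanLiYorkeExtremePair T x y,
      ∃ x : X, AbsolutelyMeanIrregular T x] := by
  have : Uncountable 𝕜 := (RCLike.ofReal_injective (K := 𝕜)).uncountable
  simp only [MeanLiYorkeExtremelyChaotic, meanLiYorkeExtremePair_iff, absolutelyMeanIrregular_iff]
  exact meanLiYorkeExtremelyChaotic_tfae_general (avgSeminorm T) atTop
end
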